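/- arXiv:2402.11109 — 2 statements merged into one kernel-verified Lean document; each statement's English description precedes it below -/
import Mathlib

section
/- For an instance J with agreeable deadlines, the intervals associated with the Greedy groups triple-overlap nowhere: if G_1, …, G_p are the groups determined by the flush times and I_i = [min_{j∈G_i} r_j, max_{j∈G_i} d_j], then I_i ∩ I_{i′} = ∅ whenever i′ ≥ i + 2; equivalently, at most two of the intervals I_1, …, I_p contain any given point in time. -/
structure SchedInstance where
  jobs : Finset ℕ
  r : ℕ → ℤ
  d : ℕ → ℤ
  window : ∀ j ∈ jobs, r j ≤ d j

def Agreeable (P : SchedInstance) : Prop :=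
  ∀ j ∈ P.jobs, ∀ j' ∈ P.jobs, P.r j < P.r j' → P.d j ≤ P.d j'

/-- with agreeable deadlines, the intervals
`I i = [min_{j ∈ G i} r j, max_{j ∈ G i} d j]` associated with the Greedy groups
triple-overlap nowhere: `I i ∩ I i' = ∅` whenever `i' ≥ i + 2`. -/
theorem greedy_intervals_no_triple_overlap
    (P : SchedInstance) (hagree : Agreeable P) (hne : P.jobs.Nonempty)
    (p : ℕ) (hp : 0 < p) (τ : ℕ → ℤ) (G : ℕ → Finset ℕ)
    (hτ0 : IsLeast {x : ℤ | ∃ j ∈ P.jobs, P.d j = x} (τ 0))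
    (hτstep : ∀ i, i + 1 < p →
      IsLeast {x : ℤ | ∃ j ∈ P.jobs, τ i < P.r j ∧ P.d j = x} (τ (i + 1)))
    (hlast : ∀ j ∈ P.jobs, P.r j ≤ τ (p - 1))
    (hτmono : ∀ i, i + 1 < p → τ i < τ (i + 1))
    (hG0 : G 0 = P.jobs.filter fun j => P.r j ≤ τ 0)
    (hGstep : ∀ i, i + 1 < p →
      G (i + 1) = P.jobs.filter fun j => τ i < P.r j ∧ P.r j ≤ τ (i + 1)) :
    ∀ i i' : ℕ, i' < p → i + 2 ≤ i' →
      ∀ (h1 : (G i).Nonempty) (h2 : (G i').Nonempty),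
        Set.Icc ((G i).inf' h1 P.r) ((G i).sup' h1 P.d) ∩
            Set.Icc ((G i').inf' h2 P.r) ((G i').sup' h2 P.d) = ∅ := by
  intro i i' hi' hii' h1 h2
  obtain ⟨m, rfl⟩ : ∃ m, i' = m + 1 := ⟨i' - 1, by omega⟩
  have hrelease : ∀ j ∈ G i, j ∈ P.jobs ∧ P.r j ≤ τ i := by
    intro j hj
    cases i with
    | zero => simpa [hG0] using hj
    | succ i =>
      rw [hGstep i (by omega), Finset.mem_filter] at hj
      exact ⟨hj.1, hj.2.2⟩
  have hτle : τ (i + 1) ≤ τ m := by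
    have hmono : ∀ n, i + 1 ≤ n → n < p → τ (i + 1) ≤ τ n := by
      intro n hn
      induction n, hn using Nat.le_induction with
      | base => exact fun _ => le_rfl
      | succ n _ ih => exact fun hnp => (ih (by omega)).trans (hτmono n hnp).le
    exact hmono m (by omega) (by omega)
  obtain ⟨⟨k, hk, hrk, hdk⟩, -⟩ := hτstep i (by omega)
  have hsup : (G i).sup' h1 P.d ≤ τ (i + 1) := by
    refine Finset.sup'_le _ _ fun j hj => ?_
    obtain ⟨hjP, hrj⟩ := hrelease j hj
    exact (hagree j hjP k hk (hrj.trans_lt hrk)).trans_eq hdk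
  have hinf : τ m < (G (m + 1)).inf' h2 P.r := by
    refine (Finset.lt_inf'_iff _).2 fun j hj => ?_
    rw [hGstep m hi', Finset.mem_filter] at hj
    exact hj.2.1
  ext t
  simp only [Set.mem_inter_iff, Set.mem_Icc, Set.mem_empty_iff_false, iff_false]
  rintro ⟨⟨-, hle⟩, hge, -⟩
  omega
end

section
/- For an instance J with agreeable deadlines and groups G_1, …, G_p determined by the flush times τ_1 < ⋯ < τ_p, consecutive groups satisfy: for every i with 1 ≤ i < p, every job j ∈ G_i has d_j ≤ τ_{i+1}, and for every i with i + 2 ≤ p, τ_{i+1} < min_{j∈G_{i+2}} r_j; in particular max_{j∈G_i} d_j ≤ τ_{i+1} < min_{j∈G_{i+2}} r_j. -/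
/-- consecutive Greedy groups satisfy (0-indexed): every job of `G i`
has deadline at most `τ (i+1)` (when `i+1 < p`), and every job of `G (i+2)` has
release time strictly after `τ (i+1)` (when `i+2 < p`); in particular
`max_{j ∈ G i} d j ≤ τ (i+1) < min_{j ∈ G (i+2)} r j`. -/
theorem greedy_consecutive_groups
    (P : SchedInstance) (hagree : Agreeable P) (hne : P.jobs.Nonempty)
    (p : ℕ) (hp : 0 < p) (τ : ℕ → ℤ) (G : ℕ → Finset ℕ)
    (hτ0 : IsLeast {x : ℤ | ∃ j ∈ P.jobs, P.d j = x} (τ 0))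
    (hτstep : ∀ i, i + 1 < p →
      IsLeast {x : ℤ | ∃ j ∈ P.jobs, τ i < P.r j ∧ P.d j = x} (τ (i + 1)))
    (hlast : ∀ j ∈ P.jobs, P.r j ≤ τ (p - 1))
    (hτmono : ∀ i, i + 1 < p → τ i < τ (i + 1))
    (hG0 : G 0 = P.jobs.filter fun j => P.r j ≤ τ 0)
    (hGstep : ∀ i, i + 1 < p →
      G (i + 1) = P.jobs.filter fun j => τ i < P.r j ∧ P.r j ≤ τ (i + 1)) :
    (∀ i, i + 1 < p → ∀ j ∈ G i, P.d j ≤ τ (i + 1)) ∧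
      (∀ i, i + 2 < p → ∀ j ∈ G (i + 2), τ (i + 1) < P.r j) := by
  refine ⟨fun i hi j hj => ?_, fun i hi j hj => ?_⟩
  · obtain ⟨k, hk, hrk, hdk⟩ := (hτstep i hi).1
    have hjr : j ∈ P.jobs ∧ P.r j ≤ τ i := by
      cases i with
      | zero => simpa [hG0] using hj
      | succ i =>
        rw [hGstep i (by omega), Finset.mem_filter] at hj
        exact ⟨hj.1, hj.2.2⟩
    exact hdk ▸ hagree j hjr.1 k hk (hjr.2.trans_lt hrk)
  · rw [hGstep (i + 1) hi, Finset.mem_filter] at hj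
    exact hj.2.1
end
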